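/- Let d ≥ 1, p ≥ 1, s ∈ (0,1) with sp < d, and assume α, β ∈ ℝ satisfy α, β, α+β ∈ (−d, sp) and α+β+sp ≠ d. Set q := dp/(d−sp). Then the weighted fractional Hardy–Sobolev–Maz'ya inequality fails: for every constant C₀ > 0 there exists u ∈ W^{s,p}_{α,β}(ℝ^d) with 0 < ∫_{ℝ^d} |u(x)|^q |x|^{(q/p)(α+β)} dx < ∞ such that ∫_{ℝ^d} ∫_{ℝ^d} |u(x)−u(y)|^p |x−y|^{−d−sp} |x|^α |y|^β dy dx − 𝒞₁(d,s,p,α,β) ∫_{ℝ^d} |u(x)|^p |x|^{α+β−sp} dx < C₀ (∫_{ℝ^d} |u(x)|^q |x|^{(q/p)(α+β)} dx)^{p/q}. -/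

import Mathlib

/-!
The weighted fractional Hardy inequality with constant `C1` has the virtual ground state
`‖x‖ ^ (-c)`, `c = (d + α + β - s p) / p`, and the inequality fails along its logarithmic cutoffs

  `u (x) = ‖x‖ ^ (-c) * φ (log ‖x‖)`,

where `φ = cutoff N` is a trapezoid of height `1` on the interval `[0, N + 2]`.

By the choice of `c` and of the critical exponent `q`, both the Hardy term and the Sobolev term are
scale invariant. With `t = log ‖x‖` and `σ` the area of the unit sphere they equal `σ ∫ φ ^ p` and
`σ ∫ φ ^ q ≥ σ N` (`lintegral_profile`).

The energy is symmetrized to `‖y‖ < ‖x‖` (`lintegral_symm_le`) and, for fixed `x`, moved by scaling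
and rotation to a fixed unit vector `e` in place of `x / ‖x‖` (`lintegral_radial_potential`). It
becomes the integral over `z` in the unit ball, against `‖e - z‖ ^ (-d - s p)`, of
`(r ^ α + r ^ β) ∫ |φ (t) - r ^ (-c) φ (t - L)| ^ p dt` with `r = ‖z‖` and `L = -log r`. Except
near the two ends of the support, `φ (t - L) = φ (t)` and the integrand is
`|1 - r ^ (-c)| ^ p φ (t) ^ p`; what happens near the ends does not depend on `N`
(`lintegral_cutoff_sub_le`), and its contribution is finite (`lintegral_errWeight_lt_top`). The main
part has coefficient exactly `C1`, because `Phi` is the spherical mean of the kernel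
(`exists_lintegral_Phi`, `lintegral_leading`). Hence the energy is at most `σ (C1 ∫ φ ^ p + M)` with
`M` independent of `N` (`exists_energy_bound`).

So the left-hand side of the Hardy–Sobolev–Maz'ya inequality stays below `σ M`, while the right-hand
side is at least `C₀ (σ N) ^ (p / q)`, which tends to infinity with `N`.
-/

open MeasureTheory Real Set Filter Topology

noncomputable section

/-- Surface measure `|𝕊^m|` of the unit sphere `𝕊^m ⊆ ℝ^(m+1)`. -/
def sphereVol (m : ℕ) : ℝ :=
  2 * Real.pi ^ (((m : ℝ) + 1) / 2) / Real.Gamma (((m : ℝ) + 1) / 2)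

/-- The profile function `Φ_{d,s,p}(r)`. -/
def Phi (d : ℕ) (s p r : ℝ) : ℝ :=
  if d = 1 then (1 - r) ^ (-1 - s * p) + (1 + r) ^ (-1 - s * p)
  else sphereVol (d - 2) *
    ∫ t in Icc (-1 : ℝ) 1,
      (1 - t ^ 2) ^ (((d : ℝ) - 3) / 2) * (1 - 2 * t * r + r ^ 2) ^ (-(((d : ℝ) + s * p) / 2))

/-- The sharp constant `𝒞₁(d,s,p,α,β)` for the weighted fractional Hardy inequality with
point singularity. -/
def C1 (d : ℕ) (s p a b : ℝ) : ℝ :=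
  ∫ r in Ioo (0 : ℝ) 1,
    r ^ (s * p - 1) * (r ^ (-a) + r ^ (-b)) *
      |1 - r ^ (((d : ℝ) + a + b - s * p) / p)| ^ p * Phi d s p r

/-! ### Polar coordinates, scaling and rotations -/

/-- Integration of a radial function in polar coordinates. -/
lemma lintegral_fun_norm {E : Type*} [NormedAddCommGroup E] [NormedSpace ℝ E]
    [MeasurableSpace E] [BorelSpace E] [FiniteDimensional ℝ E] [Nontrivial E]
    (μ : Measure E) [μ.IsAddHaarMeasure] {f : ℝ → ENNReal} (hf : Measurable f) :
    ∫⁻ x, f ‖x‖ ∂μ = μ.toSphere univ *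
      ∫⁻ r in Ioi (0 : ℝ), ENNReal.ofReal (r ^ (Module.finrank ℝ E - 1)) * f r := by
  calc ∫⁻ x, f ‖x‖ ∂μ = ∫⁻ x : ({(0)}ᶜ : Set E), f ‖x.1‖ ∂(μ.comap (↑)) := by
        rw [lintegral_subtype_comap (measurableSet_singleton _).compl (fun x ↦ f (‖x‖)),
          restrict_compl_singleton]
    _ = ∫⁻ x, f x.2 ∂μ.toSphere.prod (.volumeIoiPow (Module.finrank ℝ E - 1)) := by
        simpa using μ.measurePreserving_homeomorphUnitSphereProd.lintegral_comp_emb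
          (Homeomorph.measurableEmbedding _) (f ∘ Subtype.val ∘ Prod.snd)
    _ = μ.toSphere univ * ∫⁻ x : Ioi (0 : ℝ), f x ∂.volumeIoiPow (Module.finrank ℝ E - 1) := by
        rw [lintegral_prod _ (by fun_prop)]
        simp [mul_comm]
    _ = _ := by
        congr 1
        rw [Measure.volumeIoiPow, lintegral_withDensity_eq_lintegral_mul _ (by fun_prop) (by fun_prop)]
        rw [← lintegral_subtype_comap measurableSet_Ioi
          (fun r => ENNReal.ofReal (r ^ (Module.finrank ℝ E - 1)) * f r)]
        rfl

lemma lintegral_Ioi_eq_exp (f : ℝ → ENNReal) :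
    ∫⁻ r in Ioi (0 : ℝ), f r = ∫⁻ t, ENNReal.ofReal (Real.exp t) * f (Real.exp t) := by
  have := lintegral_image_eq_lintegral_abs_deriv_mul (s := univ) (f := Real.exp) (f' := Real.exp)
    MeasurableSet.univ (fun x _ => (Real.hasDerivAt_exp x).hasDerivWithinAt)
    (Real.exp_injective.injOn) f
  rw [image_univ, Real.range_exp] at this
  rw [this]
  simp

/-- Polar coordinates in the variable `t = log ‖x‖`: the measure `‖x‖ ^ (-d) dx` becomes a multiple
of Lebesgue measure on the line. -/
lemma lintegral_log_norm {d : ℕ} (hd : 1 ≤ d) {G : ℝ → ENNReal} (hG : Measurable G) :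
    ∫⁻ x : EuclideanSpace ℝ (Fin d), ENNReal.ofReal (‖x‖ ^ (-(d : ℝ))) * G (Real.log ‖x‖)
      = (volume : Measure (EuclideanSpace ℝ (Fin d))).toSphere univ * ∫⁻ t, G t := by
  have : Nonempty (Fin d) := ⟨⟨0, hd⟩⟩
  rw [lintegral_fun_norm volume (f := fun r => ENNReal.ofReal (r ^ (-(d : ℝ))) * G (Real.log r))
    (by fun_prop), lintegral_Ioi_eq_exp]
  congr 1
  refine lintegral_congr fun t => ?_
  rw [Real.log_exp, ← mul_assoc, ← mul_assoc, ← ENNReal.ofReal_mul (by positivity),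
    ← ENNReal.ofReal_mul (by positivity)]
  rw [finrank_euclideanSpace_fin, ← Real.exp_mul, ← Real.exp_nat_mul, ← Real.exp_add, ← Real.exp_add,
    Nat.cast_sub hd]
  have : t + (↑d - ↑(1:ℕ)) * t + t * -(d:ℝ) = 0 := by push_cast; ring
  rw [this]; simp

lemma lintegral_isometry {E F : Type*} [NormedAddCommGroup E] [InnerProductSpace ℝ E]
    [MeasurableSpace E] [BorelSpace E] [FiniteDimensional ℝ E]
    [NormedAddCommGroup F] [InnerProductSpace ℝ F]
    [MeasurableSpace F] [BorelSpace F] [FiniteDimensional ℝ F] (T : E ≃ₗᵢ[ℝ] F) (f : F → ENNReal) :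
    ∫⁻ x, f (T x) = ∫⁻ y, f y :=
  (T.measurePreserving).lintegral_comp_emb T.toHomeomorph.measurableEmbedding f

lemma lintegral_smul_comp {E : Type*} [NormedAddCommGroup E] [NormedSpace ℝ E]
    [MeasurableSpace E] [BorelSpace E] [FiniteDimensional ℝ E]
    (μ : Measure E) [μ.IsAddHaarMeasure] {r : ℝ} (hr : 0 < r) (f : E → ENNReal) :
    ∫⁻ y, f y ∂μ = ENNReal.ofReal (r ^ Module.finrank ℝ E) * ∫⁻ z, f (r • z) ∂μ := by
  have h := (Homeomorph.smulOfNeZero r hr.ne' : E ≃ₜ E).measurableEmbedding.lintegral_map f (μ := μ)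
  have h2 := Measure.map_addHaar_smul μ hr.ne'
  have h3 : (⇑(Homeomorph.smulOfNeZero r hr.ne' : E ≃ₜ E)) = (r • ·) := rfl
  rw [h3, h2, lintegral_smul_measure] at h
  rw [← h, smul_eq_mul, ← mul_assoc, ← ENNReal.ofReal_mul (by positivity), abs_of_pos (by positivity),
    mul_inv_cancel₀ (by positivity)]
  simp

/-- The Riesz potential of a radial function at `x`, moved by scaling and rotation to a fixed unit
vector `e`. -/
lemma lintegral_radial_potential {d : ℕ} {e x : EuclideanSpace ℝ (Fin d)} (he : ‖e‖ = 1) (hx : x ≠ 0)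
    (a : ℝ) (g : ℝ → ENNReal) :
    ∫⁻ y, g ‖y‖ * ENNReal.ofReal (‖x - y‖ ^ a) =
      ENNReal.ofReal (‖x‖ ^ ((d : ℝ) + a)) *
        ∫⁻ z, g (‖x‖ * ‖z‖) * ENNReal.ofReal (‖e - z‖ ^ a) := by
  have hx' : 0 < ‖x‖ := norm_pos_iff.2 hx
  -- After scaling, the reflection exchanging `e` and `x / ‖x‖` moves the pole to `e`.
  rw [lintegral_smul_comp volume hx']
  set v := ‖x‖⁻¹ • x
  have hv : ‖v‖ = 1 := by simp [v, norm_smul, hx'.ne']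
  set T := Submodule.reflection (ℝ ∙ (e - v))ᗮ
  have hT : T e = v := Submodule.reflection_sub (by rw [he, hv])
  rw [← lintegral_isometry T]
  rw [Real.rpow_add hx', ENNReal.ofReal_mul (by positivity), Real.rpow_natCast, mul_assoc,
    finrank_euclideanSpace_fin]
  congr 1
  rw [← lintegral_const_mul' _ _ ENNReal.ofReal_ne_top]
  refine lintegral_congr fun z => ?_
  have h1 : x - ‖x‖ • T z = ‖x‖ • T (e - z) := by
    rw [map_sub, hT, smul_sub]; simp [v, smul_smul, hx'.ne']
  rw [h1, norm_smul, norm_smul, LinearIsometryEquiv.norm_map, LinearIsometryEquiv.norm_map, norm_norm,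
    Real.mul_rpow (by positivity) (by positivity), ENNReal.ofReal_mul (by positivity)]
  ring

/-! ### Functions of the norm and of one coordinate -/

/-- `sphereVol n` is the total mass of the surface measure on the unit sphere of `ℝ^(n+1)`. -/
lemma sphereVol_eq (n : ℕ) :
    (volume : Measure (EuclideanSpace ℝ (Fin (n + 1)))).toSphere univ
      = ENNReal.ofReal (sphereVol n) := by
  rw [Measure.toSphere_apply_univ, EuclideanSpace.volume_ball, finrank_euclideanSpace_fin,
    ENNReal.ofReal_one, one_pow, one_mul, Fintype.card_fin, ← ENNReal.ofReal_natCast,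
    ← ENNReal.ofReal_mul (by positivity)]
  congr 1
  have h2 : (0:ℝ) < ((n + 1 : ℕ) : ℝ) / 2 := by positivity
  rw [sphereVol, Real.Gamma_add_one h2.ne', Real.sqrt_eq_rpow, ← Real.rpow_mul_natCast pi_pos.le]
  have h3 := (Real.Gamma_pos_of_pos h2).ne'
  have h4 : (1 / 2 * ((n + 1 : ℕ) : ℝ)) = ((n : ℝ) + 1) / 2 := by push_cast; ring
  rw [h4]
  push_cast at h3 ⊢
  field_simp

lemma sphereVol_pos (n : ℕ) : 0 < sphereVol n := by
  have : (0:ℝ) < ((n:ℝ) + 1) / 2 := by positivity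
  have := Real.Gamma_pos_of_pos this
  rw [sphereVol]; positivity

/-- The substitution `ρ = √(r² - a²)`. -/
lemma lintegral_subst_sqrt (n : ℕ) (a : ℝ) (f : ℝ → ENNReal) :
    ∫⁻ ρ in Ioi (0 : ℝ), ENNReal.ofReal (ρ ^ n) * f (√(a ^ 2 + ρ ^ 2)) =
      ∫⁻ r in Ioi |a|, ENNReal.ofReal (r * (r ^ 2 - a ^ 2) ^ (((n : ℝ) - 1) / 2)) * f r := by
  have key : ∀ r ∈ Ioi |a|, 0 < r ∧ 0 < r ^ 2 - a ^ 2 := by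
    intro r hr
    have h0 : 0 < r := (abs_nonneg a).trans_lt hr
    refine ⟨h0, ?_⟩
    have := sq_lt_sq.2 (show |a| < |r| by rwa [abs_of_pos h0])
    linarith
  have himg : (fun r => √(r ^ 2 - a ^ 2)) '' Ioi |a| = Ioi 0 := by
    ext ρ
    constructor
    · rintro ⟨r, hr, rfl⟩
      exact Real.sqrt_pos.2 (key r hr).2
    · intro hρ
      have hρ : 0 < ρ := hρ
      refine ⟨√(a ^ 2 + ρ ^ 2), ?_, ?_⟩
      · show |a| < _
        rw [← Real.sqrt_sq_eq_abs]
        exact Real.sqrt_lt_sqrt (sq_nonneg _) (by nlinarith)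
      · show √(_ - _) = ρ
        rw [Real.sq_sqrt (by positivity)]
        rw [add_sub_cancel_left, Real.sqrt_sq hρ.le]
  have hinj : InjOn (fun r => √(r ^ 2 - a ^ 2)) (Ioi |a|) := by
    intro r hr r' hr' h
    have h1 := (Real.sqrt_inj (key r hr).2.le (key r' hr').2.le).1 h
    nlinarith [(key r hr).1, (key r' hr').1]
  have hder : ∀ r ∈ Ioi |a|, HasDerivWithinAt (fun r => √(r ^ 2 - a ^ 2))
      (r / √(r ^ 2 - a ^ 2)) (Ioi |a|) r := by
    intro r hr
    have := ((((hasDerivAt_id r).pow 2).sub_const (a ^ 2)).sqrt (key r hr).2.ne').hasDerivWithinAt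
      (s := Ioi |a|)
    refine this.congr_deriv ?_
    simp
    field_simp
  rw [← himg, lintegral_image_eq_lintegral_abs_deriv_mul measurableSet_Ioi hder hinj]
  refine setLIntegral_congr_fun measurableSet_Ioi fun r hr => ?_
  obtain ⟨h0, h1⟩ := key r hr
  have hs := Real.sqrt_pos.2 h1
  have e1 : √(a ^ 2 + √(r ^ 2 - a ^ 2) ^ 2) = r := by
    rw [Real.sq_sqrt h1.le, add_sub_cancel, Real.sqrt_sq h0.le]
  simp only [e1]
  rw [← mul_assoc, ← ENNReal.ofReal_mul (by positivity), abs_of_pos (by positivity)]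
  congr 2
  rw [div_mul_eq_mul_div, mul_div_assoc]
  congr 1
  rw [Real.sqrt_eq_rpow, ← Real.rpow_mul_natCast h1.le, ← Real.rpow_sub h1]
  congr 1; ring

/-- Integration of a function of the norm and of one coordinate, in polar coordinates: the slices of the unit sphere orthogonal to the
axis have density `|𝕊ⁿ| (1 - t²) ^ ((n - 1) / 2)`. -/
lemma lintegral_axial (n : ℕ) {F : ℝ → ℝ → ENNReal} (hF : Measurable (Function.uncurry F)) :
    ∫⁻ z : WithLp 2 (ℝ × EuclideanSpace ℝ (Fin (n + 1))), F ‖z‖ z.fst =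
      ENNReal.ofReal (sphereVol n) * ∫⁻ r in Ioi (0 : ℝ), ENNReal.ofReal (r ^ (n + 1)) *
        ∫⁻ t in Ioo (-1 : ℝ) 1, ENNReal.ofReal ((1 - t ^ 2) ^ (((n : ℝ) - 1) / 2)) * F r (r * t) := by
  have hF' : ∀ {X : Type} [MeasurableSpace X] {f g : X → ℝ}, Measurable f → Measurable g →
      Measurable fun x => F (f x) (g x) := fun hf hg => hF.comp (hf.prodMk hg)
  calc _ = ∫⁻ p : ℝ × EuclideanSpace ℝ (Fin (n + 1)), F (√(p.1 ^ 2 + ‖p.2‖ ^ 2)) p.1 := by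
        rw [← (WithLp.volume_preserving_toLp ℝ (EuclideanSpace ℝ (Fin (n + 1)))).lintegral_comp_emb
          (MeasurableEquiv.toLp 2 _).measurableEmbedding]
        refine lintegral_congr fun p => ?_
        rw [WithLp.prod_norm_eq_of_L2]
        simp
    _ = ∫⁻ a : ℝ, ENNReal.ofReal (sphereVol n) *
          ∫⁻ ρ in Ioi (0 : ℝ), ENNReal.ofReal (ρ ^ n) * F (√(a ^ 2 + ρ ^ 2)) a := by
        rw [Measure.volume_eq_prod, lintegral_prod _ (hF' (by fun_prop) (by fun_prop)).aemeasurable]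
        refine lintegral_congr fun a => ?_
        rw [lintegral_fun_norm volume (f := fun ρ => F (√(a ^ 2 + ρ ^ 2)) a)
          (hF' (by fun_prop) (by fun_prop)), sphereVol_eq, finrank_euclideanSpace_fin]
        rfl
    _ = ENNReal.ofReal (sphereVol n) * ∫⁻ a : ℝ, ∫⁻ r in Ioi (0 : ℝ), {p : ℝ × ℝ | |p.1| < p.2}.indicator
          (fun p => ENNReal.ofReal (p.2 * (p.2 ^ 2 - p.1 ^ 2) ^ (((n : ℝ) - 1) / 2)) * F p.2 p.1)
            (a, r) := by
        rw [lintegral_const_mul' _ _ ENNReal.ofReal_ne_top]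
        congr 1
        refine lintegral_congr fun a => ?_
        -- The radius `ρ` orthogonal to the axis is traded for the full radius `r = √(a² + ρ²)`.
        rw [lintegral_subst_sqrt n a (fun r => F r a)]
        rw [← lintegral_indicator measurableSet_Ioi, ← lintegral_indicator measurableSet_Ioi]
        refine lintegral_congr fun r => ?_
        simp only [indicator, mem_Ioi, mem_ofPred_eq]
        by_cases h : |a| < r
        · have : 0 < r := (abs_nonneg a).trans_lt h
          simp [h, this]
        · simp [h]
    _ = _ := by
        congr 1
        rw [lintegral_lintegral_swap]
        · refine setLIntegral_congr_fun measurableSet_Ioi fun r hr => ?_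
          have hr : 0 < r := hr
          -- At fixed radius `r` the axial coordinate is `a = r * t`.
          rw [lintegral_smul_comp volume hr, ← lintegral_indicator measurableSet_Ioo,
            ← lintegral_const_mul' _ _ ENNReal.ofReal_ne_top,
            ← lintegral_const_mul' _ _ ENNReal.ofReal_ne_top]
          refine lintegral_congr fun t => ?_
          simp only [indicator, mem_Ioo, mem_ofPred_eq, ← abs_lt, smul_eq_mul, abs_mul, abs_of_pos hr]
          have : r * |t| < r ↔ |t| < 1 := by
            constructor
            · intro h; nlinarith
            · intro h; nlinarith
          simp only [this]
          by_cases h : |t| < 1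
          · have ht : 0 < 1 - t ^ 2 := by
              have := (sq_lt_one_iff_abs_lt_one t).2 h
              linarith
            simp only [h, if_true]
            rw [← mul_assoc, ← mul_assoc, ← ENNReal.ofReal_mul (by positivity),
              ← ENNReal.ofReal_mul (by positivity)]
            congr 2
            have : r ^ 2 - (r * t) ^ 2 = r ^ 2 * (1 - t ^ 2) := by ring
            rw [this, Real.mul_rpow (by positivity) ht.le, ← Real.rpow_natCast r 2, ← Real.rpow_mul hr.le]
            have h5 : r ^ (n + 1) = r ^ 2 * r ^ ((2:ℕ) * (((n : ℝ) - 1) / 2)) := by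
              rw [← Real.rpow_natCast, ← Real.rpow_natCast, ← Real.rpow_add hr]
              congr 1; push_cast; ring
            rw [h5]; simp; ring
          · simp [h]
        · refine (Measurable.indicator ?_ ?_).aemeasurable
          · exact (by fun_prop : Measurable fun p : ℝ × ℝ => ENNReal.ofReal
              (p.2 * (p.2 ^ 2 - p.1 ^ 2) ^ (((n : ℝ) - 1) / 2))).mul
              (hF' measurable_snd measurable_fst)
          · exact measurableSet_lt (by fun_prop) (by fun_prop)

/-- The density of the slices of the sphere is integrable. -/
lemma lintegral_slice_lt_top (n : ℕ) :
    ∫⁻ t in Ioo (-1 : ℝ) 1, ENNReal.ofReal ((1 - t ^ 2) ^ (((n : ℝ) - 1) / 2)) < ⊤ := by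
  -- The axial formula applied to the unit ball, whose volume would otherwise be infinite.
  have hm : Measurable (Function.uncurry fun r _ : ℝ => (Iio (1 : ℝ)).indicator (1 : ℝ → ENNReal) r) :=
    (measurable_one.indicator measurableSet_Iio).comp measurable_fst
  have h := lintegral_axial n hm
  have h1 : ∫⁻ z : WithLp 2 (ℝ × EuclideanSpace ℝ (Fin (n + 1))),
      (Iio (1:ℝ)).indicator (1 : ℝ → ENNReal) ‖z‖ < ⊤ := by
    have : (fun z : WithLp 2 (ℝ × EuclideanSpace ℝ (Fin (n + 1))) =>
        (Iio (1:ℝ)).indicator (1 : ℝ → ENNReal) ‖z‖) = (Metric.ball 0 1).indicator 1 := by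
      ext z; simp [indicator]
    rw [this, lintegral_indicator Metric.isOpen_ball.measurableSet]
    simpa using measure_ball_lt_top
  rw [h] at h1
  by_contra hA
  rw [not_lt, top_le_iff] at hA
  refine h1.ne ?_
  rw [ENNReal.mul_eq_top]
  left
  refine ⟨by simpa using sphereVol_pos n, ?_⟩
  rw [← top_le_iff]
  calc (⊤ : ENNReal) = ∫⁻ r in Ioo (0:ℝ) 1, ⊤ := by simp
    _ ≤ ∫⁻ r in Ioo (0:ℝ) 1, ENNReal.ofReal (r ^ (n + 1)) *
        ∫⁻ t in Ioo (-1 : ℝ) 1, ENNReal.ofReal ((1 - t ^ 2) ^ (((n : ℝ) - 1) / 2)) *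
          (Iio (1:ℝ)).indicator 1 r := by
        refine setLIntegral_mono' measurableSet_Ioo fun r hr => ?_
        have : 0 < r ^ (n + 1) := pow_pos hr.1 _
        simp only [indicator, mem_Iio, hr.2, if_true, Pi.one_apply, mul_one, hA]
        rw [ENNReal.mul_top (by simpa using this)]
    _ ≤ _ := lintegral_mono_set (fun r hr => hr.1)

/-! ### `Phi` as a spherical mean -/

lemma ofReal_Phi_one {s p r : ℝ} (hr : r ∈ Ioo (0:ℝ) 1) :
    ENNReal.ofReal (Phi 1 s p r) =
      ENNReal.ofReal ((1 - r) ^ (-1 - s * p)) + ENNReal.ofReal ((1 + r) ^ (-1 - s * p)) := by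
  have h1 : 0 < 1 - r := by linarith [hr.2]
  have h2 : 0 < 1 + r := by linarith [hr.1]
  rw [Phi, if_pos rfl, ENNReal.ofReal_add (by positivity) (by positivity)]

lemma ofReal_Phi {n : ℕ} {s p r : ℝ} (hsp : 0 ≤ s * p) (hr : r ∈ Ioo (0:ℝ) 1) :
    ENNReal.ofReal (Phi (n + 2) s p r) = ENNReal.ofReal (sphereVol n) *
      ∫⁻ t in Ioo (-1 : ℝ) 1, ENNReal.ofReal ((1 - t ^ 2) ^ (((n : ℝ) - 1) / 2)) *
        ENNReal.ofReal ((1 - 2 * (r * t) + r ^ 2) ^ (-(((n + 2 : ℕ) : ℝ) + s * p) / 2)) := by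
  have h1r : 0 < 1 - r := by linarith [hr.2]
  have hr0 := hr.1
  rw [Phi, if_neg (by omega), ENNReal.ofReal_mul (sphereVol_pos _).le]
  congr 1
  rw [← restrict_Ioo_eq_restrict_Icc]
  have hpos : ∀ t ∈ Ioo (-1 : ℝ) 1, (1 - r) ^ 2 ≤ 1 - 2 * t * r + r ^ 2 := by
    intro t ht
    nlinarith [ht.2]
  have hsq : ∀ t ∈ Ioo (-1 : ℝ) 1, 0 < 1 - t ^ 2 := by
    intro t ht
    nlinarith [ht.1, ht.2]
  have hnn : ∀ t ∈ Ioo (-1 : ℝ) 1, 0 ≤ (1 - t ^ 2) ^ ((((n + 2 : ℕ) : ℝ) - 3) / 2) *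
      (1 - 2 * t * r + r ^ 2) ^ (-((((n + 2 : ℕ) : ℝ) + s * p) / 2)) := by
    intro t ht
    have h2 := hsq t ht
    have h3 : 0 < 1 - 2 * t * r + r ^ 2 := lt_of_lt_of_le (by positivity) (hpos t ht)
    positivity
  have he : ((((n + 2 : ℕ) : ℝ) - 3) / 2) = ((n : ℝ) - 1) / 2 := by push_cast; ring
  have hint : IntegrableOn (fun t : ℝ => (1 - t ^ 2) ^ (((n : ℝ) - 1) / 2)) (Ioo (-1) 1) := by
    refine ⟨Measurable.aestronglyMeasurable (by fun_prop), ?_⟩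
    rw [hasFiniteIntegral_iff_ofReal]
    · exact lintegral_slice_lt_top n
    · filter_upwards [ae_restrict_mem measurableSet_Ioo] with t ht
      have h2 := hsq t ht
      simp only [Pi.zero_apply]
      positivity
  rw [ofReal_integral_eq_lintegral_ofReal]
  · refine setLIntegral_congr_fun measurableSet_Ioo fun t ht => ?_
    have h2 := hsq t ht
    rw [← ENNReal.ofReal_mul (by positivity), he]
    congr 3
    · ring
    · ring
  · rw [he]
    refine hint.mul_bdd (c := ((1 - r) ^ 2) ^ (-((((n + 2 : ℕ) : ℝ) + s * p) / 2)))
      (Measurable.aestronglyMeasurable (by fun_prop)) ?_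
    filter_upwards [ae_restrict_mem measurableSet_Ioo] with t ht
    have h3 : 0 < 1 - 2 * t * r + r ^ 2 := lt_of_lt_of_le (by positivity) (hpos t ht)
    rw [Real.norm_of_nonneg (by positivity)]
    exact Real.rpow_le_rpow_of_nonpos (by positivity) (hpos t ht)
      (neg_nonpos.2 (by positivity))
  · filter_upwards [ae_restrict_mem measurableSet_Ioo] with t ht using hnn t ht

/-- `Phi` is the spherical mean of the kernel `‖e - z‖ ^ (-d - s p)` with pole `e` on the unit
sphere: in the unit ball, integrating a radial function against the kernel is a one-dimensional
integral with density `r ^ (d - 1) * Phi d s p r`. -/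
lemma exists_lintegral_Phi {d : ℕ} (hd : 1 ≤ d) {s p : ℝ} (hsp : 0 ≤ s * p) :
    ∃ e : EuclideanSpace ℝ (Fin d), ‖e‖ = 1 ∧ ∀ g : ℝ → ENNReal, Measurable g →
      ∫⁻ z, (Ioo (0 : ℝ) 1).indicator g ‖z‖ * ENNReal.ofReal (‖e - z‖ ^ (-(d : ℝ) - s * p)) =
        ∫⁻ r in Ioo (0 : ℝ) 1, g r * ENNReal.ofReal (r ^ (d - 1) * Phi d s p r) := by
  obtain rfl | ⟨n, rfl⟩ : d = 1 ∨ ∃ n, d = n + 2 := by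
    obtain rfl | h := hd.eq_or_lt
    · simp
    · exact Or.inr ⟨d - 2, by omega⟩
  · -- In dimension one the sphere consists of two points.
    let T : ℝ ≃ₗᵢ[ℝ] EuclideanSpace ℝ (Fin 1) :=
      (((stdOrthonormalBasis ℝ ℝ).reindex (finCongr (by simp))).repr)
    refine ⟨T 1, by simp, fun g hg => ?_⟩
    rw [← lintegral_isometry T]
    simp only [← map_sub, LinearIsometryEquiv.norm_map]
    have hgm : Measurable ((Ioo (0:ℝ) 1).indicator g) := hg.indicator measurableSet_Ioo
    rw [← lintegral_add_compl _ (measurableSet_Ioi (a := (0:ℝ))), compl_Ioi, ← restrict_Iio_eq_restrict_Iic]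
    have hneg : ∫⁻ z in Iio (0:ℝ), (Ioo (0:ℝ) 1).indicator g ‖z‖ *
          ENNReal.ofReal (‖1 - z‖ ^ (-((1:ℕ):ℝ) - s * p)) =
        ∫⁻ z in Ioi (0:ℝ), (Ioo (0:ℝ) 1).indicator g ‖z‖ *
          ENNReal.ofReal (‖1 + z‖ ^ (-((1:ℕ):ℝ) - s * p)) := by
      rw [← lintegral_indicator measurableSet_Iio, ← lintegral_indicator measurableSet_Ioi,
        ← lintegral_isometry (LinearIsometryEquiv.neg ℝ (E := ℝ))]
      refine lintegral_congr fun z => ?_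
      simp [indicator]
    -- Both half-lines are folded onto the positive one, giving the two terms of `Phi`.
    rw [hneg, ← lintegral_add_left (by fun_prop)]
    rw [← lintegral_indicator measurableSet_Ioi, ← lintegral_indicator measurableSet_Ioo]
    refine lintegral_congr fun z => ?_
    by_cases h : z ∈ Ioo (0:ℝ) 1
    · have h' : z ∈ Ioi (0:ℝ) := h.1
      have h1 : 0 < 1 - z := by linarith [h.2]
      have h2 : 0 < 1 + z := by linarith [h.1]
      rw [indicator_of_mem h, indicator_of_mem h', Real.norm_of_nonneg h.1.le, indicator_of_mem h,
        Real.norm_of_nonneg h1.le, Real.norm_of_nonneg h2.le]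
      simp only [Nat.sub_self, pow_zero, one_mul]
      rw [ofReal_Phi_one h]
      push_cast
      ring
    · rw [indicator_of_notMem h]
      by_cases h' : z ∈ Ioi (0:ℝ)
      · have : (Ioo (0:ℝ) 1).indicator g ‖z‖ = 0 := by
          rw [Real.norm_of_nonneg (le_of_lt h'), indicator_of_notMem h]
        rw [indicator_of_mem h', this]; simp
      · rw [indicator_of_notMem h']
  · -- In higher dimension an axis is split off and the pole `e` is put on it.
    have hfin : Module.finrank ℝ (WithLp 2 (ℝ × EuclideanSpace ℝ (Fin (n + 1)))) = n + 2 := by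
      rw [(WithLp.linearEquiv 2 ℝ (ℝ × EuclideanSpace ℝ (Fin (n + 1)))).finrank_eq]
      simp; ring
    let T : WithLp 2 (ℝ × EuclideanSpace ℝ (Fin (n + 1))) ≃ₗᵢ[ℝ] EuclideanSpace ℝ (Fin (n + 2)) :=
      ((stdOrthonormalBasis ℝ _).reindex (finCongr hfin)).repr
    let e₀ : WithLp 2 (ℝ × EuclideanSpace ℝ (Fin (n + 1))) := WithLp.toLp 2 (1, 0)
    have he₀ : ‖e₀‖ = 1 := by
      rw [WithLp.prod_norm_eq_of_L2]; simp [e₀]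
    refine ⟨T e₀, by rw [LinearIsometryEquiv.norm_map, he₀], fun g hg => ?_⟩
    rw [← lintegral_isometry T]
    simp only [← map_sub, LinearIsometryEquiv.norm_map]
    have hgm : Measurable ((Ioo (0:ℝ) 1).indicator g) := hg.indicator measurableSet_Ioo
    set b : ℝ := -(((n + 2 : ℕ) : ℝ) + s * p) / 2 with hb
    have hF : Measurable (Function.uncurry fun r τ : ℝ => (Ioo (0:ℝ) 1).indicator g r *
        ENNReal.ofReal ((1 - 2 * τ + r ^ 2) ^ b)) :=
      (hgm.comp measurable_fst).mul (by fun_prop)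
    have hdist : ∀ z : WithLp 2 (ℝ × EuclideanSpace ℝ (Fin (n + 1))),
        ‖e₀ - z‖ ^ (-((n + 2 : ℕ) : ℝ) - s * p) = (1 - 2 * z.fst + ‖z‖ ^ 2) ^ b := by
      intro z
      have : 1 - 2 * z.fst + ‖z‖ ^ 2 = ‖e₀ - z‖ ^ 2 := by
        rw [WithLp.prod_norm_sq_eq_of_L2, WithLp.prod_norm_sq_eq_of_L2]
        simp [e₀]
        ring
      rw [this, ← Real.rpow_natCast, ← Real.rpow_mul (norm_nonneg _)]
      congr 1
      rw [hb]; push_cast; ring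
    simp only [hdist]
    rw [lintegral_axial n hF, ← lintegral_const_mul' _ _ ENNReal.ofReal_ne_top,
      ← lintegral_indicator measurableSet_Ioi, ← lintegral_indicator measurableSet_Ioo]
    refine lintegral_congr fun r => ?_
    by_cases h : r ∈ Ioo (0:ℝ) 1
    · have h' : r ∈ Ioi (0:ℝ) := h.1
      have hr0 : 0 < r := h.1
      rw [indicator_of_mem h, indicator_of_mem h', indicator_of_mem h, ENNReal.ofReal_mul (by positivity),
        ofReal_Phi hsp h]
      have : ∀ t : ℝ, ENNReal.ofReal ((1 - t ^ 2) ^ (((n : ℝ) - 1) / 2)) *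
          (g r * ENNReal.ofReal ((1 - 2 * (r * t) + r ^ 2) ^ b)) =
          g r * (ENNReal.ofReal ((1 - t ^ 2) ^ (((n : ℝ) - 1) / 2)) *
            ENNReal.ofReal ((1 - 2 * (r * t) + r ^ 2) ^ b)) := fun t => by ring
      simp only [this]
      rw [lintegral_const_mul _ (by fun_prop)]
      simp only [Nat.add_succ_sub_one]
      ring
    · rw [indicator_of_notMem h]
      by_cases h' : r ∈ Ioi (0:ℝ)
      · rw [indicator_of_mem h', indicator_of_notMem h]; simp
      · rw [indicator_of_notMem h']

/-! ### The logarithmic cutoff -/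

/-- The trapezoidal cutoff: `1` on `[1, N + 1]`, `0` outside `[0, N + 2]`, affine in between. -/
def cutoff (N t : ℝ) : ℝ := max 0 (min 1 (min t (N + 2 - t)))

lemma cutoff_nonneg (N t : ℝ) : 0 ≤ cutoff N t := le_max_left _ _

lemma cutoff_le_one (N t : ℝ) : cutoff N t ≤ 1 := max_le zero_le_one (min_le_left _ _)

lemma cutoff_of_nonpos {N t : ℝ} (h : t ≤ 0) : cutoff N t = 0 :=
  max_eq_left ((min_le_right _ _).trans ((min_le_left _ _).trans h))

lemma cutoff_of_ge {N t : ℝ} (h : N + 2 ≤ t) : cutoff N t = 0 :=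
  max_eq_left ((min_le_right _ _).trans ((min_le_right _ _).trans (by linarith)))

lemma cutoff_of_mem {N t : ℝ} (h1 : 1 ≤ t) (h2 : t ≤ N + 1) : cutoff N t = 1 := by
  have : min 1 (min t (N + 2 - t)) = 1 := min_eq_left (le_min h1 (by linarith))
  rw [cutoff, this]; exact max_eq_right zero_le_one

lemma continuous_cutoff (N : ℝ) : Continuous (cutoff N) := by
  unfold cutoff; fun_prop

@[fun_prop] lemma measurable_cutoff (N : ℝ) : Measurable (cutoff N) := (continuous_cutoff N).measurable

lemma abs_cutoff_sub_le (N t t' : ℝ) : |cutoff N t - cutoff N t'| ≤ |t - t'| := by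
  refine (abs_max_sub_max_le_max _ _ _ _).trans ?_
  simp only [sub_self, abs_zero, max_le_iff, abs_nonneg, true_and]
  refine (abs_min_sub_min_le_max _ _ _ _).trans ?_
  simp only [sub_self, abs_zero, max_le_iff, abs_nonneg, true_and]
  refine (abs_min_sub_min_le_max _ _ _ _).trans ?_
  simp only [max_le_iff, le_refl, true_and]
  rw [show N + 2 - t - (N + 2 - t') = t' - t by ring, abs_sub_comm]

lemma abs_cutoff_sub_le_one (N t t' : ℝ) : |cutoff N t - cutoff N t'| ≤ 1 := by
  rw [abs_le]
  constructor <;> linarith [cutoff_nonneg N t, cutoff_nonneg N t', cutoff_le_one N t, cutoff_le_one N t']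

/-- Outside a set of measure at most `2 (1 + L)` near the two ends of the support, `cutoff N t` and
`cutoff N (t - L)` coincide and the integrand is exactly `|1 - c| ^ p * cutoff N t ^ p`. The error
is therefore independent of `N`; the factor `min L 1` records that it is small when `L` is. -/
lemma lintegral_cutoff_sub_le {p N L c : ℝ} (hp : 1 ≤ p) (hL : 0 ≤ L) :
    ∫⁻ t, ENNReal.ofReal (|cutoff N t - c * cutoff N (t - L)| ^ p) ≤
      ENNReal.ofReal (|1 - c| ^ p) * (∫⁻ t, ENNReal.ofReal (cutoff N t ^ p)) +
        ENNReal.ofReal ((min L 1 + |1 - c|) ^ p * (2 * (1 + L))) := by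
  set A : Set ℝ := Icc 0 (1 + L) ∪ Icc (N + 1) (N + 2 + L)
  set B : ℝ := (min L 1 + |1 - c|) ^ p
  have hB0 : 0 ≤ min L 1 + |1 - c| := add_nonneg (le_min hL zero_le_one) (abs_nonneg _)
  have hB : 0 ≤ B := Real.rpow_nonneg hB0 _
  have hp0 : p ≠ 0 := by linarith
  have hA : MeasurableSet A := measurableSet_Icc.union measurableSet_Icc
  have hvA : volume A ≤ ENNReal.ofReal (2 * (1 + L)) := by
    refine (measure_union_le _ _).trans ?_
    rw [Real.volume_Icc, Real.volume_Icc, ← ENNReal.ofReal_add (by linarith) (by linarith)]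
    exact ENNReal.ofReal_le_ofReal (by linarith)
  have hpt : ∀ t, ENNReal.ofReal (|cutoff N t - c * cutoff N (t - L)| ^ p) ≤
      ENNReal.ofReal (|1 - c| ^ p) * ENNReal.ofReal (cutoff N t ^ p) +
        A.indicator (fun _ => ENNReal.ofReal B) t := by
    intro t
    by_cases h : t ∈ A
    · rw [indicator_of_mem h]
      refine le_add_left (ENNReal.ofReal_le_ofReal (Real.rpow_le_rpow (abs_nonneg _) ?_ (by linarith)))
      have h1 : |cutoff N t - cutoff N (t - L)| ≤ min L 1 := by
        refine le_min ?_ (abs_cutoff_sub_le_one _ _ _)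
        have := abs_cutoff_sub_le N t (t - L)
        rwa [sub_sub_cancel, abs_of_nonneg hL] at this
      have h2 : |(1 - c) * cutoff N (t - L)| ≤ |1 - c| := by
        rw [abs_mul, abs_of_nonneg (cutoff_nonneg _ _)]
        exact mul_le_of_le_one_right (abs_nonneg _) (cutoff_le_one _ _)
      calc |cutoff N t - c * cutoff N (t - L)|
          = |(cutoff N t - cutoff N (t - L)) + (1 - c) * cutoff N (t - L)| := by ring_nf
        _ ≤ _ := (abs_add_le _ _).trans (add_le_add h1 h2)
    · rw [indicator_of_notMem h, add_zero]
      simp only [A, mem_union, mem_Icc, not_or, not_and, not_le] at h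
      by_cases h0 : t < 0
      · rw [cutoff_of_nonpos h0.le, cutoff_of_nonpos (by linarith)]; simp [hp0]
      · have h1 := h.1 (not_lt.1 h0)
        by_cases h2 : N + 1 ≤ t
        · have h3 := h.2 h2
          rw [cutoff_of_ge (by linarith : N + 2 ≤ t), cutoff_of_ge (by linarith)]; simp [hp0]
        · rw [cutoff_of_mem (by linarith) (by linarith : t ≤ N + 1),
            cutoff_of_mem (by linarith) (by linarith)]
          simp
  calc _ ≤ ∫⁻ t, (ENNReal.ofReal (|1 - c| ^ p) * ENNReal.ofReal (cutoff N t ^ p) +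
        A.indicator (fun _ => ENNReal.ofReal B) t) := lintegral_mono hpt
    _ = ENNReal.ofReal (|1 - c| ^ p) * (∫⁻ t, ENNReal.ofReal (cutoff N t ^ p)) +
          ENNReal.ofReal B * volume A := by
        rw [lintegral_add_left (by fun_prop), lintegral_const_mul _ (by fun_prop),
          lintegral_indicator_const hA]
    _ ≤ _ := by
        rw [ENNReal.ofReal_mul hB]
        gcongr

lemma lintegral_cutoff_rpow_ge {N r : ℝ} :
    ENNReal.ofReal N ≤ ∫⁻ t, ENNReal.ofReal (cutoff N t ^ r) := by
  calc ENNReal.ofReal N = ∫⁻ t, (Icc (1:ℝ) (N + 1)).indicator 1 t := by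
        rw [lintegral_indicator_one measurableSet_Icc, Real.volume_Icc, add_sub_cancel_right]
    _ ≤ _ := by
        refine lintegral_mono fun t => ?_
        by_cases h : t ∈ Icc (1:ℝ) (N + 1)
        · rw [indicator_of_mem h, cutoff_of_mem h.1 h.2]; simp
        · rw [indicator_of_notMem h]; simp

lemma lintegral_cutoff_rpow_lt_top {N r : ℝ} (hr : 0 < r) :
    ∫⁻ t, ENNReal.ofReal (cutoff N t ^ r) < ⊤ := by
  calc _ ≤ ∫⁻ t, (Icc (0:ℝ) (N + 2)).indicator 1 t := by
        refine lintegral_mono fun t => ?_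
        by_cases h : t ∈ Icc (0:ℝ) (N + 2)
        · rw [indicator_of_mem h]
          simpa using Real.rpow_le_one (cutoff_nonneg _ _) (cutoff_le_one _ _) hr.le
        · rw [indicator_of_notMem h]
          simp only [mem_Icc, not_and, not_le] at h
          have : cutoff N t = 0 := by
            by_cases h0 : 0 ≤ t
            · exact cutoff_of_ge (h h0).le
            · exact cutoff_of_nonpos (not_le.1 h0).le
          simp [this, hr.ne']
    _ < ⊤ := by
        rw [lintegral_indicator_one measurableSet_Icc, Real.volume_Icc]
        exact ENNReal.ofReal_lt_top

/-! ### The error weight -/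

lemma lintegral_ball_rpow_lt_top {d : ℕ} (hd : 1 ≤ d) {b R : ℝ} (hb : -(d : ℝ) < b) :
    ∫⁻ z in Metric.ball (0 : EuclideanSpace ℝ (Fin d)) R, ENNReal.ofReal (‖z‖ ^ b) < ⊤ := by
  have h := integrableOn_ball_of_norm_le_rpow (μ := (volume : Measure (EuclideanSpace ℝ (Fin d))))
    (by simpa using hd) (f := fun z => ‖z‖ ^ b) (C := 1) (α := -b) (r := R)
    (by rw [finrank_euclideanSpace_fin]; linarith)
    (ae_of_all _ fun x => by
      rw [Real.norm_of_nonneg (Real.rpow_nonneg (norm_nonneg _) _)]; simp)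
    (Measurable.aestronglyMeasurable (by fun_prop))
  have h2 := h.2
  rwa [hasFiniteIntegral_iff_ofReal (ae_of_all _ fun x => Real.rpow_nonneg (norm_nonneg _) _)] at h2

lemma abs_one_sub_exp_le (x : ℝ) : |1 - Real.exp x| ≤ |x| * Real.exp |x| := by
  rcases le_total 0 x with h | h
  · have h1 : 1 ≤ Real.exp x := Real.one_le_exp h
    rw [abs_of_nonpos (by linarith), abs_of_nonneg h]
    have h2 := Real.add_one_le_exp (-x)
    have h3 : Real.exp (-x) * Real.exp x = 1 := by rw [← Real.exp_add]; simp
    nlinarith [Real.exp_pos x]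
  · have h1 : Real.exp x ≤ 1 := Real.exp_le_one_iff.2 h
    rw [abs_of_nonneg (by linarith), abs_of_nonpos h]
    have h2 := Real.add_one_le_exp x
    have h3 : 1 ≤ Real.exp (-x) := Real.one_le_exp (by linarith)
    nlinarith

/-- The radial weight that controls the error made by cutting off the power `‖x‖ ^ (-c)`: the
error term of `lintegral_cutoff_sub_le` for `L = -log r` and dilation factor `r ^ (-c)`, times the
symmetrized weight `r ^ α + r ^ β`. -/
def errWeight (p α β c r : ℝ) : ℝ :=
  (r ^ α + r ^ β) * ((min (-Real.log r) 1 + |1 - r ^ (-c)|) ^ p * (2 * (1 + -Real.log r)))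

lemma measurable_errWeight (p α β c : ℝ) : Measurable (errWeight p α β c) := by
  unfold errWeight
  exact ((by fun_prop : Measurable fun r : ℝ => r ^ α + r ^ β)).mul
    (((((Real.measurable_log.neg).min measurable_const).add
      (by simpa only [Real.norm_eq_abs] using
        (by fun_prop : Measurable fun r : ℝ => ‖1 - r ^ (-c)‖))).pow_const p).mul (by fun_prop))

lemma neg_log_nonneg {r : ℝ} (h : r ∈ Ioo (0:ℝ) 1) : 0 ≤ -Real.log r := by
  have := Real.log_nonpos h.1.le h.2.le
  linarith

/-- The error weight is `O((1 - r) ^ p)` at `r = 1`, the cutoff and the power being Lipschitz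
there. -/
lemma errWeight_near {p : ℝ} (hp : 1 ≤ p) (α β c : ℝ) :
    ∃ C, 0 ≤ C ∧ ∀ r ∈ Ioo (0:ℝ) 1, 1 / 2 ≤ r → errWeight p α β c r ≤ C * (1 - r) ^ p := by
  refine ⟨((1/2) ^ (-|α|) + (1/2) ^ (-|β|)) * ((2 + 2 * |c| * Real.exp |c|) ^ p * 4),
    by positivity, fun r hr hr2 => ?_⟩
  obtain ⟨h0, h1⟩ := hr
  have h1r : 0 < 1 - r := by linarith
  have hpow : ∀ a : ℝ, r ^ a ≤ (1/2) ^ (-|a|) := fun a =>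
    (Real.rpow_le_rpow_of_exponent_ge h0 h1.le (neg_abs_le a)).trans
      (Real.rpow_le_rpow_of_nonpos (by norm_num) hr2 (neg_nonpos.2 (abs_nonneg a)))
  have hL0 : 0 ≤ -Real.log r := neg_log_nonneg ⟨h0, h1⟩
  have hL : -Real.log r ≤ 2 * (1 - r) := by
    have h2 := Real.one_sub_inv_le_log_of_pos h0
    have h3 : r⁻¹ - 1 ≤ 2 * (1 - r) := by
      have : r⁻¹ - 1 = r⁻¹ * (1 - r) := by field_simp
      rw [this]
      have : r⁻¹ ≤ 2 := by
        rw [inv_le_comm₀ h0 (by norm_num)]; linarith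
      gcongr
    linarith
  have hL1 : -Real.log r ≤ 1 := by linarith
  have hc : |1 - r ^ (-c)| ≤ 2 * |c| * Real.exp |c| * (1 - r) := by
    rw [Real.rpow_def_of_pos h0]
    have h4 := abs_one_sub_exp_le (Real.log r * -c)
    have h5 : |Real.log r * -c| = |c| * -Real.log r := by
      rw [abs_mul, abs_neg, ← abs_neg (Real.log r), abs_of_nonneg hL0, mul_comm]
    rw [h5] at h4
    calc _ ≤ _ := h4
      _ ≤ |c| * (2 * (1 - r)) * Real.exp (|c| * 1) := by gcongr
      _ = _ := by rw [mul_one]; ring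
  rw [errWeight]
  have hmain : (min (-Real.log r) 1 + |1 - r ^ (-c)|) ^ p ≤
      (2 + 2 * |c| * Real.exp |c|) ^ p * (1 - r) ^ p := by
    rw [← Real.mul_rpow (by positivity) h1r.le]
    refine Real.rpow_le_rpow (add_nonneg (le_min hL0 zero_le_one) (abs_nonneg _)) ?_ (by linarith)
    have := min_le_left (-Real.log r) 1
    linarith
  have hnn : 0 ≤ (min (-Real.log r) 1 + |1 - r ^ (-c)|) ^ p :=
    Real.rpow_nonneg (add_nonneg (le_min hL0 zero_le_one) (abs_nonneg _)) _
  calc _ ≤ ((1/2) ^ (-|α|) + (1/2) ^ (-|β|)) *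
        (((2 + 2 * |c| * Real.exp |c|) ^ p * (1 - r) ^ p) * 4) := by
        refine mul_le_mul (add_le_add (hpow α) (hpow β)) ?_ ?_ (by positivity)
        · exact mul_le_mul hmain (by linarith) (by linarith) (by positivity)
        · exact mul_nonneg hnn (by linarith)
    _ = _ := by ring

/-- Near `r = 0` the error weight is dominated by a power `r ^ b` with `b > -D`, which is integrable
at the origin of `ℝ^D`. -/
lemma errWeight_far {p α β c D : ℝ} (hp : 1 ≤ p) (hα : -D < α) (hβ : -D < β)
    (hα' : -D < α - c * p) (hβ' : -D < β - c * p) :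
    ∃ C b, 0 ≤ C ∧ -D < b ∧ ∀ r ∈ Ioo (0:ℝ) 1, errWeight p α β c r ≤ C * r ^ b := by
  set m := min (min α β) (min (α - c * p) (β - c * p)) with hm
  have hmD : -D < m := lt_min (lt_min hα hβ) (lt_min hα' hβ')
  set ε := min 1 ((m + D) / 2) with hε
  have hε0 : 0 < ε := lt_min one_pos (by linarith)
  have hε1 : ε ≤ 1 := min_le_left _ _
  have hε2 : ε ≤ (m + D) / 2 := min_le_right _ _
  -- The loss of `ε` in the exponent absorbs the logarithm.
  refine ⟨4 * (3 ^ p * (2 / ε)), m - ε, by positivity, by linarith, fun r hr => ?_⟩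
  obtain ⟨h0, h1⟩ := hr
  have hL0 : 0 ≤ -Real.log r := neg_log_nonneg ⟨h0, h1⟩
  have hcp : 0 < r ^ (-c) := Real.rpow_pos_of_pos h0 _
  have hnn : 0 ≤ min (-Real.log r) 1 + |1 - r ^ (-c)| :=
    add_nonneg (le_min hL0 zero_le_one) (abs_nonneg _)
  have hpow : ∀ a : ℝ, m ≤ a → r ^ a ≤ r ^ m := fun a ha =>
    Real.rpow_le_rpow_of_exponent_ge h0 h1.le ha
  have hmain : (min (-Real.log r) 1 + |1 - r ^ (-c)|) ^ p ≤ 3 ^ p * (1 + r ^ (-c * p)) := by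
    have h2 : min (-Real.log r) 1 + |1 - r ^ (-c)| ≤ 3 * max 1 (r ^ (-c)) := by
      have e1 := min_le_right (-Real.log r) 1
      have e2 : |1 - r ^ (-c)| ≤ 1 + r ^ (-c) := by
        rw [abs_le]; constructor <;> linarith
      have e3 := le_max_left 1 (r ^ (-c))
      have e4 := le_max_right 1 (r ^ (-c))
      linarith
    refine (Real.rpow_le_rpow hnn h2 (by linarith)).trans ?_
    rw [Real.mul_rpow (by norm_num) (by positivity)]
    gcongr
    rw [Real.rpow_mul h0.le]
    rcases max_choice 1 (r ^ (-c)) with h | h <;> rw [h]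
    · rw [Real.one_rpow]
      have := Real.rpow_nonneg hcp.le p
      linarith
    · linarith
  have hlog : 2 * (1 + -Real.log r) ≤ 2 / ε * r ^ (-ε) := by
    have h3 := Real.add_one_le_exp (ε * -Real.log r)
    have h4 : Real.exp (ε * -Real.log r) = r ^ (-ε) := by
      rw [Real.rpow_def_of_pos h0]; congr 1; ring
    rw [h4] at h3
    rw [div_mul_eq_mul_div, le_div_iff₀ hε0]
    nlinarith
  have hsum : (r ^ α + r ^ β) * (1 + r ^ (-c * p)) ≤ 4 * r ^ m := by
    have e1 := hpow α ((min_le_left _ _).trans (min_le_left _ _))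
    have e2 := hpow β ((min_le_left _ _).trans (min_le_right _ _))
    have e3 := hpow (α - c * p) ((min_le_right _ _).trans (min_le_left _ _))
    have e4 := hpow (β - c * p) ((min_le_right _ _).trans (min_le_right _ _))
    rw [sub_eq_add_neg, ← neg_mul, Real.rpow_add h0] at e3 e4
    linarith
  have hp1 : 0 < r ^ (-c * p) := Real.rpow_pos_of_pos h0 _
  calc errWeight p α β c r ≤ (r ^ α + r ^ β) * ((3 ^ p * (1 + r ^ (-c * p))) * (2 / ε * r ^ (-ε))) := by
        rw [errWeight]
        have : 0 ≤ 2 * (1 + -Real.log r) := by linarith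
        gcongr
    _ = ((r ^ α + r ^ β) * (1 + r ^ (-c * p))) * (3 ^ p * (2 / ε)) * r ^ (-ε) := by ring
    _ ≤ (4 * r ^ m) * (3 ^ p * (2 / ε)) * r ^ (-ε) := by gcongr
    _ = _ := by rw [sub_eq_add_neg, Real.rpow_add h0]; ring

/-- The total error is finite. At the pole `e` the kernel singularity `-d - s p` is compensated by
the vanishing of order `p > s p` of the weight, and at the origin the weight itself is integrable. -/
lemma lintegral_errWeight_lt_top {d : ℕ} (hd : 1 ≤ d) {s p α β c : ℝ} (hp : 1 ≤ p)
    (hs : s < 1) (hsp : 0 ≤ s * p)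
    (hα : -(d : ℝ) < α) (hβ : -(d : ℝ) < β)
    (hα' : -(d : ℝ) < α - c * p) (hβ' : -(d : ℝ) < β - c * p)
    {e : EuclideanSpace ℝ (Fin d)} (he : ‖e‖ = 1) :
    ∫⁻ z, (Ioo (0 : ℝ) 1).indicator (fun r => ENNReal.ofReal (errWeight p α β c r)) ‖z‖ *
      ENNReal.ofReal (‖e - z‖ ^ (-(d : ℝ) - s * p)) < ⊤ := by
  obtain ⟨A, hA, hnear⟩ := errWeight_near hp α β c
  obtain ⟨B, b, hB, hb, hfar⟩ := errWeight_far hp hα hβ hα' hβ'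
  set K : ℝ := B * (1/2) ^ (-(d : ℝ) - s * p) with hK
  have hbound : ∀ z : EuclideanSpace ℝ (Fin d),
      (Ioo (0 : ℝ) 1).indicator (fun r => ENNReal.ofReal (errWeight p α β c r)) ‖z‖ *
        ENNReal.ofReal (‖e - z‖ ^ (-(d : ℝ) - s * p)) ≤
      ENNReal.ofReal A * (Metric.ball 0 2).indicator
          (fun z => ENNReal.ofReal (‖z‖ ^ (p - d - s * p))) (e - z) +
        ENNReal.ofReal K * (Metric.ball 0 1).indicator (fun z => ENNReal.ofReal (‖z‖ ^ b)) z := by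
    intro z
    by_cases h : ‖z‖ ∈ Ioo (0:ℝ) 1
    · rw [indicator_of_mem h]
      have hz1 : z ∈ Metric.ball (0 : EuclideanSpace ℝ (Fin d)) 1 := by simpa using h.2
      have hz2 : e - z ∈ Metric.ball (0 : EuclideanSpace ℝ (Fin d)) 2 := by
        have := norm_sub_le e z
        have := h.2
        simp; linarith
      have hdist : 1 - ‖z‖ ≤ ‖e - z‖ := by
        have := norm_sub_norm_le e z
        rwa [he] at this
      have hpos : 0 < ‖e - z‖ := lt_of_lt_of_le (by linarith [h.2]) hdist
      rw [indicator_of_mem hz1, indicator_of_mem hz2, ← ENNReal.ofReal_mul' (by positivity),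
        ← ENNReal.ofReal_mul hA, ← ENNReal.ofReal_mul (by positivity)]
      rcases le_total (1/2) ‖z‖ with h2 | h2
      · refine le_add_right (ENNReal.ofReal_le_ofReal ?_)
        calc _ ≤ A * (1 - ‖z‖) ^ p * ‖e - z‖ ^ (-(d : ℝ) - s * p) := by
              gcongr; exact hnear _ h h2
          _ ≤ A * ‖e - z‖ ^ p * ‖e - z‖ ^ (-(d : ℝ) - s * p) := by
              have : 0 ≤ 1 - ‖z‖ := by linarith [h.2]
              gcongr
          _ = _ := by
              rw [mul_assoc, ← Real.rpow_add hpos]; congr 2; ring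
      · refine le_add_left (ENNReal.ofReal_le_ofReal ?_)
        calc _ ≤ (B * ‖z‖ ^ b) * (1/2) ^ (-(d : ℝ) - s * p) := by
              refine mul_le_mul (hfar _ h) ?_ (by positivity) (by positivity)
              refine Real.rpow_le_rpow_of_nonpos (by norm_num) (by linarith) ?_
              have : (0:ℝ) ≤ d := by positivity
              linarith
          _ = _ := by rw [hK]; ring
    · rw [indicator_of_notMem h]; simp
  refine (lintegral_mono hbound).trans_lt ?_
  have hm : ∀ (b R : ℝ), Measurable ((Metric.ball (0 : EuclideanSpace ℝ (Fin d)) R).indicator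
      (fun z => ENNReal.ofReal (‖z‖ ^ b))) := fun b R =>
    Measurable.indicator (by fun_prop) measurableSet_ball
  rw [lintegral_add_right _ ((hm _ _).const_mul _), lintegral_const_mul' _ _ ENNReal.ofReal_ne_top,
    lintegral_const_mul' _ _ ENNReal.ofReal_ne_top,
    lintegral_sub_left_eq_self (fun z => (Metric.ball (0 : EuclideanSpace ℝ (Fin d)) 2).indicator
      (fun z => ENNReal.ofReal (‖z‖ ^ (p - d - s * p))) z) e,
    lintegral_indicator measurableSet_ball, lintegral_indicator measurableSet_ball]
  refine ENNReal.add_lt_top.2 ⟨ENNReal.mul_lt_top ENNReal.ofReal_lt_top ?_,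
    ENNReal.mul_lt_top ENNReal.ofReal_lt_top ?_⟩
  · refine lintegral_ball_rpow_lt_top hd ?_
    nlinarith
  · exact lintegral_ball_rpow_lt_top hd hb

/-! ### The energy of the cut-off ground state -/

/-- A double integral is bounded by that of the symmetrized integrand over `0 < ‖y‖ < ‖x‖`. -/
lemma lintegral_symm_le {d : ℕ} (hd : 1 ≤ d)
    {K : EuclideanSpace ℝ (Fin d) × EuclideanSpace ℝ (Fin d) → ENNReal} (hK : Measurable K)
    (hdiag : ∀ x y, ‖x‖ = ‖y‖ → K (x, y) = 0) :
    ∫⁻ x, ∫⁻ y, K (x, y) ≤ ∫⁻ x, ∫⁻ y, (Ioo 0 ‖x‖).indicator (fun _ => K (x, y) + K (y, x)) ‖y‖ := by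
  have : Nonempty (Fin d) := ⟨⟨0, hd⟩⟩
  set S : Set (EuclideanSpace ℝ (Fin d) × EuclideanSpace ℝ (Fin d)) :=
    {z | ‖z.2‖ ∈ Ioo 0 ‖z.1‖} with hS
  have hSm : MeasurableSet S := by
    have h1 : MeasurableSet {z : EuclideanSpace ℝ (Fin d) × EuclideanSpace ℝ (Fin d) | 0 < ‖z.2‖} :=
      measurableSet_lt (by fun_prop) (by fun_prop)
    have h2 : MeasurableSet {z : EuclideanSpace ℝ (Fin d) × EuclideanSpace ℝ (Fin d) |
        ‖z.2‖ < ‖z.1‖} :=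
      measurableSet_lt (by fun_prop) (by fun_prop)
    exact h1.inter h2
  have hK' : Measurable fun z => K (Prod.swap z) := hK.comp measurable_swap
  have hA := hK.indicator hSm
  have hB := hK'.indicator hSm
  have hne : ∀ᵐ x : EuclideanSpace ℝ (Fin d), x ≠ 0 := by simp [ae_iff]
  calc ∫⁻ x, ∫⁻ y, K (x, y)
      ≤ ∫⁻ x, ∫⁻ y, (S.indicator K (x, y) + S.indicator (fun z => K (Prod.swap z)) (y, x)) := by
        refine lintegral_mono_ae (hne.mono fun x hx => lintegral_mono_ae (hne.mono fun y hy => ?_))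
        have hx' := norm_pos_iff.2 hx
        have hy' := norm_pos_iff.2 hy
        rcases lt_trichotomy ‖x‖ ‖y‖ with h | h | h
        · rw [indicator_of_mem (s := S) (a := (y, x)) ⟨hx', h⟩]; simp
        · rw [hdiag x y h]; exact zero_le
        · rw [indicator_of_mem (s := S) (a := (x, y)) ⟨hy', h⟩]; simp
    _ = (∫⁻ x, ∫⁻ y, S.indicator K (x, y)) +
          ∫⁻ x, ∫⁻ y, S.indicator (fun z => K (Prod.swap z)) (y, x) := by
        rw [← lintegral_add_left hA.lintegral_prod_right']
        refine lintegral_congr fun x => ?_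
        exact lintegral_add_left (hA.comp (by fun_prop)) _
    _ = (∫⁻ x, ∫⁻ y, S.indicator K (x, y)) +
          ∫⁻ x, ∫⁻ y, S.indicator (fun z => K (Prod.swap z)) (x, y) := by
        congr 1
        exact lintegral_lintegral_swap (hB.comp measurable_swap).aemeasurable
    _ = _ := by
        rw [← lintegral_add_left hA.lintegral_prod_right']
        refine lintegral_congr fun x => ?_
        have hAx : Measurable fun y => S.indicator K (x, y) := hA.comp (by fun_prop)
        rw [← lintegral_add_left hAx]
        refine lintegral_congr fun y => ?_
        by_cases h : ‖y‖ ∈ Ioo 0 ‖x‖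
        · rw [indicator_of_mem (s := S) (a := (x, y)) h,
            indicator_of_mem (s := S) (a := (x, y)) h, indicator_of_mem h]; simp
        · rw [indicator_of_notMem (s := S) (a := (x, y)) h,
            indicator_of_notMem (s := S) (a := (x, y)) h, indicator_of_notMem h]; simp

/-- Radial profile of the test function: the virtual ground state `r ^ (-c)`, cut off at
logarithmic scale. -/
def profile (c N r : ℝ) : ℝ := r ^ (-c) * cutoff N (Real.log r)

@[fun_prop] lemma measurable_profile (c N : ℝ) : Measurable (profile c N) := by
  unfold profile
  exact (by fun_prop : Measurable fun r : ℝ => r ^ (-c)).mul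
    ((measurable_cutoff N).comp Real.measurable_log)

lemma profile_nonneg {c N r : ℝ} (hr : 0 ≤ r) : 0 ≤ profile c N r :=
  mul_nonneg (Real.rpow_nonneg hr _) (cutoff_nonneg _ _)

/-- The symmetrized energy density of the profile at `(R, R * r)`, `0 < r < 1`, `t = log R`,
stripped of its power of `R`. -/
def density (p α β c N t r : ℝ) : ENNReal :=
  (Ioo (0 : ℝ) 1).indicator (fun r => ENNReal.ofReal
    ((r ^ α + r ^ β) * |cutoff N t - r ^ (-c) * cutoff N (t - -Real.log r)| ^ p)) r

lemma measurable_density (p α β c N : ℝ) :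
    Measurable fun z : ℝ × ℝ => density p α β c N z.1 z.2 := by
  have h : Measurable fun z : ℝ × ℝ => ENNReal.ofReal
      ((z.2 ^ α + z.2 ^ β) *
        |cutoff N z.1 - z.2 ^ (-c) * cutoff N (z.1 - -Real.log z.2)| ^ p) := by
    simp only [← Real.norm_eq_abs]
    fun_prop
  exact h.indicator (measurable_snd measurableSet_Ioo)

lemma lintegral_density_le {p α β c N r : ℝ} (hp : 1 ≤ p) :
    ∫⁻ t, density p α β c N t r ≤
      (∫⁻ t, ENNReal.ofReal (cutoff N t ^ p)) * (Ioo (0 : ℝ) 1).indicator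
        (fun r => ENNReal.ofReal ((r ^ α + r ^ β) * |1 - r ^ (-c)| ^ p)) r +
      (Ioo (0 : ℝ) 1).indicator (fun r => ENNReal.ofReal (errWeight p α β c r)) r := by
  by_cases h : r ∈ Ioo (0 : ℝ) 1
  · have h0 : 0 ≤ r ^ α + r ^ β := by have := h.1; positivity
    simp only [density, indicator_of_mem h, errWeight, ENNReal.ofReal_mul h0]
    rw [lintegral_const_mul' _ _ ENNReal.ofReal_ne_top]
    refine (mul_le_mul_right (lintegral_cutoff_sub_le hp (neg_log_nonneg h)) _).trans_eq ?_
    ring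
  · simp [density, indicator_of_notMem h]

/-- Homogeneity of the symmetrized energy density: a power of `R` splits off. -/
lemma profile_density {p α β c N R : ℝ} (hR : 0 < R) (r : ℝ) :
    (Ioo 0 R).indicator (fun r => ENNReal.ofReal
      (|profile c N R - profile c N r| ^ p * (R ^ α * r ^ β + R ^ β * r ^ α))) (R * r) =
    ENNReal.ofReal (R ^ (α + β - c * p)) * density p α β c N (Real.log R) r := by
  by_cases h : r ∈ Ioo (0 : ℝ) 1
  · have hm : R * r ∈ Ioo 0 R := ⟨mul_pos hR h.1, by nlinarith [h.2]⟩
    have hr := h.1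
    rw [density, indicator_of_mem h, indicator_of_mem hm, ← ENNReal.ofReal_mul (by positivity)]
    congr 1
    have e1 : profile c N R - profile c N (R * r) = R ^ (-c) *
        (cutoff N (Real.log R) - r ^ (-c) * cutoff N (Real.log R - -Real.log r)) := by
      rw [profile, profile, Real.mul_rpow hR.le hr.le, Real.log_mul hR.ne' hr.ne', sub_neg_eq_add]
      ring
    rw [e1, abs_mul, abs_of_pos (Real.rpow_pos_of_pos hR _),
      Real.mul_rpow (by positivity) (abs_nonneg _), ← Real.rpow_mul hR.le,
      Real.mul_rpow hR.le hr.le, Real.mul_rpow hR.le hr.le,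
      show α + β - c * p = -c * p + (α + β) by ring, Real.rpow_add hR, Real.rpow_add hR]
    ring
  · have hm : R * r ∉ Ioo 0 R := fun hm => h ⟨pos_of_mul_pos_right hm.1 hR.le, by
      have := hm.2; nlinarith⟩
    rw [density, indicator_of_notMem h, indicator_of_notMem hm, mul_zero]

/-- Upper bound for the energy of the cut-off ground state: its leading part is proportional to
`∫ cutoff ^ p`, and the remainder does not depend on `N`. -/
lemma lintegral_energy_le {d : ℕ} (hd : 1 ≤ d) {s p α β c N : ℝ} (hp : 1 ≤ p)
    (hc : c * p = d + α + β - s * p)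
    {e : EuclideanSpace ℝ (Fin d)} (he : ‖e‖ = 1) :
    ∫⁻ x : EuclideanSpace ℝ (Fin d), ∫⁻ y : EuclideanSpace ℝ (Fin d), ENNReal.ofReal
      (|profile c N ‖x‖ - profile c N ‖y‖| ^ p * ‖x - y‖ ^ (-(d : ℝ) - s * p) * ‖x‖ ^ α * ‖y‖ ^ β) ≤
    (volume : Measure (EuclideanSpace ℝ (Fin d))).toSphere univ *
      ((∫⁻ t, ENNReal.ofReal (cutoff N t ^ p)) *
        (∫⁻ z : EuclideanSpace ℝ (Fin d), (Ioo (0 : ℝ) 1).indicator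
            (fun r => ENNReal.ofReal ((r ^ α + r ^ β) * |1 - r ^ (-c)| ^ p)) ‖z‖ *
          ENNReal.ofReal (‖e - z‖ ^ (-(d : ℝ) - s * p))) +
        ∫⁻ z : EuclideanSpace ℝ (Fin d),
          (Ioo (0 : ℝ) 1).indicator (fun r => ENNReal.ofReal (errWeight p α β c r)) ‖z‖ *
          ENNReal.ofReal (‖e - z‖ ^ (-(d : ℝ) - s * p))) := by
  have : Nonempty (Fin d) := ⟨⟨0, hd⟩⟩
  have hne : ∀ᵐ x : EuclideanSpace ℝ (Fin d), x ≠ 0 := by simp [ae_iff]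
  set a : ℝ := -(d : ℝ) - s * p with ha
  have hker : Measurable fun z : EuclideanSpace ℝ (Fin d) => ENNReal.ofReal (‖e - z‖ ^ a) := by
    fun_prop
  have hD : Measurable fun w : ℝ × EuclideanSpace ℝ (Fin d) =>
      density p α β c N w.1 ‖w.2‖ * ENNReal.ofReal (‖e - w.2‖ ^ a) :=
    ((measurable_density p α β c N).comp
      (by fun_prop : Measurable fun w : ℝ × EuclideanSpace ℝ (Fin d) => (w.1, ‖w.2‖))).mul
      (hker.comp measurable_snd)
  have hK : Measurable fun w : EuclideanSpace ℝ (Fin d) × EuclideanSpace ℝ (Fin d) =>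
      ENNReal.ofReal (|profile c N ‖w.1‖ - profile c N ‖w.2‖| ^ p * ‖w.1 - w.2‖ ^ a *
        ‖w.1‖ ^ α * ‖w.2‖ ^ β) := by
    simp only [← Real.norm_eq_abs]
    fun_prop
  refine (lintegral_symm_le hd hK fun x y h => ?_).trans ?_
  · simp [h, (by linarith : p ≠ 0)]
  calc _ = ∫⁻ x : EuclideanSpace ℝ (Fin d), ENNReal.ofReal (‖x‖ ^ (-(d : ℝ))) *
        ∫⁻ z : EuclideanSpace ℝ (Fin d), density p α β c N (Real.log ‖x‖) ‖z‖ *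
          ENNReal.ofReal (‖e - z‖ ^ a) := by
        refine lintegral_congr_ae (hne.mono fun x hx => ?_)
        have hR := norm_pos_iff.2 hx
        set g : ℝ → ENNReal := (Ioo 0 ‖x‖).indicator (fun r => ENNReal.ofReal
          (|profile c N ‖x‖ - profile c N r| ^ p * (‖x‖ ^ α * r ^ β + ‖x‖ ^ β * r ^ α))) with hg
        have h1 : ∀ y : EuclideanSpace ℝ (Fin d), (Ioo 0 ‖x‖).indicator (fun _ =>
            ENNReal.ofReal (|profile c N ‖x‖ - profile c N ‖y‖| ^ p * ‖x - y‖ ^ a *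
              ‖x‖ ^ α * ‖y‖ ^ β) +
            ENNReal.ofReal (|profile c N ‖y‖ - profile c N ‖x‖| ^ p * ‖y - x‖ ^ a *
              ‖y‖ ^ α * ‖x‖ ^ β)) ‖y‖ = g ‖y‖ * ENNReal.ofReal (‖x - y‖ ^ a) := by
          intro y
          by_cases h : ‖y‖ ∈ Ioo 0 ‖x‖
          · rw [hg, indicator_of_mem h, indicator_of_mem h,
              ← ENNReal.ofReal_add (by positivity) (by positivity),
              ← ENNReal.ofReal_mul' (by positivity), norm_sub_rev y x,
              abs_sub_comm (profile c N ‖y‖)]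
            congr 1; ring
          · rw [hg, indicator_of_notMem h, indicator_of_notMem h, zero_mul]
        refine (lintegral_congr h1).trans ?_
        rw [lintegral_radial_potential he hx a g]
        simp only [hg, profile_density hR, mul_assoc]
        rw [lintegral_const_mul' _ _ ENNReal.ofReal_ne_top, ← mul_assoc,
          ← ENNReal.ofReal_mul (by positivity), ← Real.rpow_add hR]
        congr 4
        rw [hc, ha]; ring
    _ = volume.toSphere univ * ∫⁻ t, ∫⁻ z : EuclideanSpace ℝ (Fin d),
          density p α β c N t ‖z‖ * ENNReal.ofReal (‖e - z‖ ^ a) :=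
        lintegral_log_norm hd hD.lintegral_prod_right'
    _ = volume.toSphere univ * ∫⁻ z : EuclideanSpace ℝ (Fin d), (∫⁻ t,
          density p α β c N t ‖z‖) * ENNReal.ofReal (‖e - z‖ ^ a) := by
        rw [lintegral_lintegral_swap hD.aemeasurable]
        congr 1
        exact lintegral_congr fun z => lintegral_mul_const' _ _ ENNReal.ofReal_ne_top
    _ ≤ volume.toSphere univ * ∫⁻ z : EuclideanSpace ℝ (Fin d),
          (((∫⁻ t, ENNReal.ofReal (cutoff N t ^ p)) * (Ioo (0 : ℝ) 1).indicator
            (fun r => ENNReal.ofReal ((r ^ α + r ^ β) * |1 - r ^ (-c)| ^ p)) ‖z‖) *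
              ENNReal.ofReal (‖e - z‖ ^ a) +
          (Ioo (0 : ℝ) 1).indicator (fun r => ENNReal.ofReal (errWeight p α β c r)) ‖z‖ *
            ENNReal.ofReal (‖e - z‖ ^ a)) := by
        gcongr with z
        rw [← add_mul]
        gcongr
        exact lintegral_density_le hp
    _ = _ := by
        have hE : Measurable fun z : EuclideanSpace ℝ (Fin d) => (Ioo (0 : ℝ) 1).indicator
            (fun r => ENNReal.ofReal (errWeight p α β c r)) ‖z‖ * ENNReal.ofReal (‖e - z‖ ^ a) :=
          (((measurable_errWeight p α β c).ennreal_ofReal.indicator measurableSet_Ioo).comp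
            measurable_norm).mul hker
        have hp0 : 0 < p := by linarith
        rw [lintegral_add_right _ hE]
        simp only [mul_assoc (∫⁻ t, ENNReal.ofReal (cutoff N t ^ p))]
        rw [lintegral_const_mul' _ _ (lintegral_cutoff_rpow_lt_top hp0).ne]

/-! ### The sharp constant -/

lemma Phi_nonneg (d : ℕ) {s p r : ℝ} (hr : r ∈ Ioo (0 : ℝ) 1) : 0 ≤ Phi d s p r := by
  obtain ⟨h0, h1⟩ := hr
  unfold Phi
  split_ifs
  · have : 0 < 1 - r := by linarith
    positivity
  · refine mul_nonneg (sphereVol_pos _).le (setIntegral_nonneg measurableSet_Icc fun t ht => ?_)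
    have h2 : 0 ≤ 1 - t ^ 2 := by nlinarith [ht.1, ht.2]
    have h3 : 0 ≤ 1 - 2 * t * r + r ^ 2 := by nlinarith [sq_nonneg (t - r)]
    positivity

lemma measurable_Phi (d : ℕ) (s p : ℝ) : Measurable (Phi d s p) := by
  unfold Phi
  split_ifs
  · fun_prop
  · refine Measurable.const_mul ?_ _
    refine StronglyMeasurable.measurable (StronglyMeasurable.integral_prod_right ?_)
    exact Measurable.stronglyMeasurable (by fun_prop)

/-- The leading coefficient of the energy is `C1`. The integrand is the one in `C1` up to the
substitution `r ^ (c * p) = r ^ (d + α + β - s * p)`. -/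
lemma lintegral_leading {d : ℕ} (hd : 1 ≤ d) {s p α β c : ℝ} (hp : 1 ≤ p)
    (hc : c * p = d + α + β - s * p)
    (hfin : ∫⁻ r in Ioo (0 : ℝ) 1, ENNReal.ofReal ((r ^ α + r ^ β) * |1 - r ^ (-c)| ^ p) *
      ENNReal.ofReal (r ^ (d - 1) * Phi d s p r) < ⊤) :
    0 ≤ C1 d s p α β ∧
    ∫⁻ r in Ioo (0 : ℝ) 1, ENNReal.ofReal ((r ^ α + r ^ β) * |1 - r ^ (-c)| ^ p) *
      ENNReal.ofReal (r ^ (d - 1) * Phi d s p r) = ENNReal.ofReal (C1 d s p α β) := by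
  have hp0 : 0 < p := by linarith
  have hc' : ((d : ℝ) + α + β - s * p) / p = c := by rw [← hc]; field_simp
  set f : ℝ → ℝ := fun r => r ^ (s * p - 1) * (r ^ (-α) + r ^ (-β)) *
      |1 - r ^ (((d : ℝ) + α + β - s * p) / p)| ^ p * Phi d s p r with hf
  have hf0 : ∀ r ∈ Ioo (0 : ℝ) 1, 0 ≤ f r := fun r hr => by
    have := Phi_nonneg d (s := s) (p := p) hr
    have := hr.1
    positivity
  have hfm : Measurable f := by
    simp only [hf, ← Real.norm_eq_abs]
    exact (by fun_prop : Measurable _).mul (measurable_Phi d s p)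
  have heq : ∀ r ∈ Ioo (0 : ℝ) 1, ENNReal.ofReal ((r ^ α + r ^ β) * |1 - r ^ (-c)| ^ p) *
      ENNReal.ofReal (r ^ (d - 1) * Phi d s p r) = ENNReal.ofReal (f r) := fun r hr => by
    have h0 := hr.1
    rw [← ENNReal.ofReal_mul (by positivity)]
    congr 1
    have e1 : |1 - r ^ (-c)| ^ p = r ^ (-(c * p)) * |1 - r ^ c| ^ p := by
      have : 1 - r ^ (-c) = r ^ (-c) * -(1 - r ^ c) := by
        rw [mul_neg, mul_sub, ← Real.rpow_add h0, neg_add_cancel, Real.rpow_zero]; ring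
      rw [this, abs_mul, abs_neg, abs_of_pos (Real.rpow_pos_of_pos h0 _),
        Real.mul_rpow (by positivity) (abs_nonneg _), ← Real.rpow_mul h0.le, neg_mul]
    have e2 : r ^ (d - 1) = r ^ ((d : ℝ) - 1) := by
      rw [← Real.rpow_natCast, Nat.cast_sub hd, Nat.cast_one]
    have e3 : (r ^ α + r ^ β) * r ^ (-(c * p)) * r ^ ((d : ℝ) - 1) =
        r ^ (s * p - 1) * (r ^ (-α) + r ^ (-β)) := by
      rw [add_mul, add_mul, mul_add, ← Real.rpow_add h0, ← Real.rpow_add h0, ← Real.rpow_add h0,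
        ← Real.rpow_add h0, ← Real.rpow_add h0, ← Real.rpow_add h0, add_comm]
      congr 2 <;> rw [hc] <;> ring
    simp only [hf]
    rw [hc', e1, e2, ← e3]
    ring
  rw [setLIntegral_congr_fun measurableSet_Ioo heq] at hfin ⊢
  have hae : 0 ≤ᵐ[volume.restrict (Ioo (0 : ℝ) 1)] f :=
    (ae_restrict_iff' measurableSet_Ioo).2 (ae_of_all _ hf0)
  have hint : Integrable f (volume.restrict (Ioo (0 : ℝ) 1)) :=
    ⟨hfm.aestronglyMeasurable, (hasFiniteIntegral_iff_ofReal hae).2 hfin⟩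
  refine ⟨integral_nonneg_of_ae hae, ?_⟩
  rw [C1, ofReal_integral_eq_lintegral_ofReal hint hae]

/-- Energy bound with the sharp constant: the defect does not grow with the cutoff length `N`. -/
lemma exists_energy_bound {d : ℕ} (hd : 1 ≤ d) {s p α β c : ℝ} (hp : 1 ≤ p)
    (hs : s ∈ Ioo (0 : ℝ) 1) (hc : c * p = d + α + β - s * p)
    (hα : α ∈ Ioo (-(d : ℝ)) (s * p)) (hβ : β ∈ Ioo (-(d : ℝ)) (s * p)) :
    0 ≤ C1 d s p α β ∧ ∃ M : ENNReal, M < ⊤ ∧ ∀ N,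
      ∫⁻ x : EuclideanSpace ℝ (Fin d), ∫⁻ y : EuclideanSpace ℝ (Fin d), ENNReal.ofReal
        (|profile c N ‖x‖ - profile c N ‖y‖| ^ p * ‖x - y‖ ^ (-(d : ℝ) - s * p) *
          ‖x‖ ^ α * ‖y‖ ^ β) ≤
      (volume : Measure (EuclideanSpace ℝ (Fin d))).toSphere univ *
        ((∫⁻ t, ENNReal.ofReal (cutoff N t ^ p)) * ENNReal.ofReal (C1 d s p α β) + M) := by
  have hsp : 0 ≤ s * p := mul_nonneg hs.1.le (by linarith)
  obtain ⟨e, he, hPhi⟩ := exists_lintegral_Phi hd hsp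
  have hM := lintegral_errWeight_lt_top hd (c := c) hp hs.2 hsp hα.1 hβ.1
    (by rw [hc]; linarith [hβ.2]) (by rw [hc]; linarith [hα.2]) he
  set g : ℝ → ENNReal := fun r => ENNReal.ofReal ((r ^ α + r ^ β) * |1 - r ^ (-c)| ^ p) with hg
  have hgm : Measurable g := by
    simp only [hg, ← Real.norm_eq_abs]
    fun_prop
  have hle : ∀ r, (Ioo (0 : ℝ) 1).indicator g r ≤
      (Ioo (0 : ℝ) 1).indicator (fun r => ENNReal.ofReal (errWeight p α β c r)) r := fun r => by
    by_cases h : r ∈ Ioo (0 : ℝ) 1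
    · rw [indicator_of_mem h, indicator_of_mem h]
      refine ENNReal.ofReal_le_ofReal ?_
      have h0 := h.1
      have hL := neg_log_nonneg h
      have hmin : 0 ≤ min (-Real.log r) 1 := le_min hL zero_le_one
      have h1 : |1 - r ^ (-c)| ^ p ≤ (min (-Real.log r) 1 + |1 - r ^ (-c)|) ^ p := by
        gcongr
        linarith
      have h2 : (0 : ℝ) ≤ |1 - r ^ (-c)| ^ p := by positivity
      rw [errWeight]
      gcongr
      nlinarith
    · rw [indicator_of_notMem h, indicator_of_notMem h]
  have hfin := (lintegral_mono fun z : EuclideanSpace ℝ (Fin d) => mul_le_mul_left (hle ‖z‖)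
    (ENNReal.ofReal (‖e - z‖ ^ (-(d : ℝ) - s * p)))).trans_lt hM
  rw [hPhi g hgm] at hfin
  obtain ⟨hC, hlead⟩ := lintegral_leading hd hp hc hfin
  refine ⟨hC, _, hM, fun N => ?_⟩
  rw [← hlead, ← hPhi g hgm]
  exact lintegral_energy_le hd hp hc he

/-! ### Critical norms and conclusion -/

/-- Weighted `L ^ r` norms of the radial profile in the logarithmic variable. -/
lemma lintegral_profile {d : ℕ} (hd : 1 ≤ d) {c N r b κ : ℝ}
    (h : -c * r + b = -(d : ℝ) + κ) :
    ∫⁻ x : EuclideanSpace ℝ (Fin d), ENNReal.ofReal (|profile c N ‖x‖| ^ r * ‖x‖ ^ b) =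
      (volume : Measure (EuclideanSpace ℝ (Fin d))).toSphere univ *
        ∫⁻ t, ENNReal.ofReal (cutoff N t ^ r * Real.exp (κ * t)) := by
  have : Nonempty (Fin d) := ⟨⟨0, hd⟩⟩
  have hne : ∀ᵐ x : EuclideanSpace ℝ (Fin d), x ≠ 0 := by simp [ae_iff]
  rw [← lintegral_log_norm hd (by fun_prop)]
  refine lintegral_congr_ae (hne.mono fun x hx => ?_)
  have hR := norm_pos_iff.2 hx
  beta_reduce
  rw [← ENNReal.ofReal_mul (by positivity)]
  congr 1
  rw [abs_of_nonneg (profile_nonneg hR.le), profile,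
    Real.mul_rpow (by positivity) (cutoff_nonneg _ _), ← Real.rpow_mul hR.le, mul_right_comm,
    ← Real.rpow_add hR, h, Real.rpow_add hR, Real.rpow_def_of_pos hR κ, mul_comm κ]
  ring

/-- Finiteness of the norm for which the cut-off ground state is not critical, so that a growing
factor `exp (κ t)` remains. -/
lemma lintegral_cutoff_exp_lt_top {N r κ : ℝ} (hr : 0 < r) (hκ : 0 ≤ κ) :
    ∫⁻ t, ENNReal.ofReal (cutoff N t ^ r * Real.exp (κ * t)) < ⊤ := by
  calc _ ≤ ∫⁻ t, ENNReal.ofReal (cutoff N t ^ r) * ENNReal.ofReal (Real.exp (κ * (N + 2))) := by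
        refine lintegral_mono fun t => ?_
        have h0 := Real.rpow_nonneg (cutoff_nonneg N t) r
        rw [← ENNReal.ofReal_mul h0]
        refine ENNReal.ofReal_le_ofReal ?_
        rcases le_total (N + 2) t with h | h
        · simp [cutoff_of_ge h, hr.ne']
        · gcongr
    _ < ⊤ := by
        rw [lintegral_mul_const' _ _ ENNReal.ofReal_ne_top]
        exact ENNReal.mul_lt_top (lintegral_cutoff_rpow_lt_top hr) ENNReal.ofReal_lt_top

lemma measurable_profile_rpow (d : ℕ) (c N r b : ℝ) :
    Measurable fun x : EuclideanSpace ℝ (Fin d) => |profile c N ‖x‖| ^ r * ‖x‖ ^ b := by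
  simp only [← Real.norm_eq_abs]
  fun_prop

lemma toSphere_univ_pos {d : ℕ} (hd : 1 ≤ d) :
    0 < ((volume : Measure (EuclideanSpace ℝ (Fin d))).toSphere univ).toReal := by
  have : Nonempty (Fin d) := ⟨⟨0, hd⟩⟩
  exact ENNReal.toReal_pos (Measure.measure_univ_ne_zero.2 (Measure.toSphere_ne_zero _))
    (measure_ne_top _ _)

/-- **Failure of the weighted fractional Hardy–Sobolev–Maz'ya inequality for `k = d`**
(Theorem 4.3): for the critical exponent `q = dp/(d-sp)` and singularity at the origin,
no positive constant `C₀` can make the inequality hold for all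
`u ∈ W^{s,p}_{α,β}(ℝ^d)`. -/
theorem HSM_fails_at_origin
    (d : ℕ) (s p q α β : ℝ)
    (hd : 1 ≤ d) (hp : 1 ≤ p) (hs : s ∈ Ioo (0 : ℝ) 1) (hsd : s * p < d)
    (hα : α ∈ Ioo (-(d : ℝ)) (s * p)) (hβ : β ∈ Ioo (-(d : ℝ)) (s * p))
    (hαβ : α + β ∈ Ioo (-(d : ℝ)) (s * p))
    (hne : α + β + s * p ≠ d)
    (hq : q = d * p / (d - s * p)) :
    ∀ C₀ > (0 : ℝ), ∃ u : EuclideanSpace ℝ (Fin d) → ℝ,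
      Measurable u ∧
      Integrable (fun x : EuclideanSpace ℝ (Fin d) => |u x| ^ p * ‖x‖ ^ (α + β)) ∧
      Integrable (fun z : EuclideanSpace ℝ (Fin d) × EuclideanSpace ℝ (Fin d) =>
        |u z.1 - u z.2| ^ p * ‖z.1 - z.2‖ ^ (-(d : ℝ) - s * p) * ‖z.1‖ ^ α * ‖z.2‖ ^ β) ∧
      Integrable (fun x : EuclideanSpace ℝ (Fin d) =>
        |u x| ^ q * ‖x‖ ^ ((q / p) * (α + β))) ∧
      0 < ∫ x, |u x| ^ q * ‖x‖ ^ ((q / p) * (α + β)) ∧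
      (∫ x, ∫ y, |u x - u y| ^ p * ‖x - y‖ ^ (-(d : ℝ) - s * p) * ‖x‖ ^ α * ‖y‖ ^ β)
          - C1 d s p α β * ∫ x, |u x| ^ p * ‖x‖ ^ (α + β - s * p)
        < C₀ * (∫ x, |u x| ^ q * ‖x‖ ^ ((q / p) * (α + β))) ^ (p / q) := by
  intro C₀ hC₀
  have hp0 : 0 < p := by linarith
  have hd0 : (0 : ℝ) < d := by exact_mod_cast hd
  have hds : 0 < d - s * p := by linarith
  have hq0 : 0 < q := by rw [hq]; positivity
  have hsp : 0 ≤ s * p := mul_nonneg hs.1.le hp0.le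
  -- The homogeneity of the virtual ground state `‖x‖ ^ (-c)`.
  set c : ℝ := (d + α + β - s * p) / p with hc_def
  have hc : c * p = d + α + β - s * p := by rw [hc_def]; field_simp
  obtain ⟨hC, M, hM, hE⟩ := exists_energy_bound hd hp hs hc hα hβ
  set σ := (volume : Measure (EuclideanSpace ℝ (Fin d))).toSphere univ with hσ
  have hσpos : 0 < σ.toReal := toSphere_univ_pos hd
  have hσtop : σ ≠ ⊤ := measure_ne_top _ _
  -- The defect `σ M` is beaten by `C₀ (σ N) ^ (p / q)` for a long enough cutoff.
  obtain ⟨N, hN, hN0⟩ : ∃ N : ℝ, σ.toReal * M.toReal < C₀ * (σ.toReal * N) ^ (p / q) ∧ 0 < N := by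
    have h1 : Tendsto (fun N : ℝ => C₀ * (σ.toReal * N) ^ (p / q)) atTop atTop :=
      ((tendsto_rpow_atTop (div_pos hp0 hq0)).comp
        (tendsto_id.const_mul_atTop hσpos)).const_mul_atTop hC₀
    exact ((h1.eventually_gt_atTop _).and (eventually_gt_atTop 0)).exists
  have hexp_p : -c * p + (α + β) = -(d : ℝ) + s * p := by rw [neg_mul, hc]; ring
  have hexp_H : -c * p + (α + β - s * p) = -(d : ℝ) + 0 := by rw [neg_mul, hc]; ring
  have hexp_q : -c * q + q / p * (α + β) = -(d : ℝ) + 0 := by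
    rw [hc_def, hq]; field_simp; ring
  have hW := lintegral_profile hd (N := N) hexp_p
  have hH := lintegral_profile hd (N := N) hexp_H
  have hJ := lintegral_profile hd (N := N) hexp_q
  simp only [zero_mul, Real.exp_zero, mul_one] at hH hJ
  have hIp := lintegral_cutoff_rpow_lt_top (N := N) hp0
  have hIq := lintegral_cutoff_rpow_lt_top (N := N) hq0
  set Ip := ∫⁻ t, ENNReal.ofReal (cutoff N t ^ p) with hIp_def
  set Iq := ∫⁻ t, ENNReal.ofReal (cutoff N t ^ q) with hIq_def
  have hnn : ∀ r b : ℝ, 0 ≤ᵐ[volume] fun x : EuclideanSpace ℝ (Fin d) =>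
      |profile c N ‖x‖| ^ r * ‖x‖ ^ b := fun r b => ae_of_all _ fun x => by
    simp only [Pi.zero_apply]; positivity
  have hmeas : ∀ r b : ℝ, AEStronglyMeasurable (fun x : EuclideanSpace ℝ (Fin d) =>
      |profile c N ‖x‖| ^ r * ‖x‖ ^ b) volume := fun r b =>
    (measurable_profile_rpow d c N r b).aestronglyMeasurable
  -- The energy density on the product space.
  set F : EuclideanSpace ℝ (Fin d) × EuclideanSpace ℝ (Fin d) → ℝ := fun z =>
    |profile c N ‖z.1‖ - profile c N ‖z.2‖| ^ p * ‖z.1 - z.2‖ ^ (-(d : ℝ) - s * p) *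
      ‖z.1‖ ^ α * ‖z.2‖ ^ β with hF
  have hFm : Measurable F := by
    simp only [hF, ← Real.norm_eq_abs]
    fun_prop
  have hF0 : 0 ≤ᵐ[volume] F := ae_of_all _ fun z => by
    simp only [hF, Pi.zero_apply]; positivity
  have hFle : ∫⁻ z, ENNReal.ofReal (F z) ≤ σ * (Ip * ENNReal.ofReal (C1 d s p α β) + M) := by
    rw [Measure.volume_eq_prod, lintegral_prod _ hFm.ennreal_ofReal.aemeasurable]
    exact hE N
  have htop : σ * (Ip * ENNReal.ofReal (C1 d s p α β) + M) ≠ ⊤ :=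
    ENNReal.mul_ne_top hσtop
      (ENNReal.add_ne_top.2 ⟨ENNReal.mul_ne_top hIp.ne ENNReal.ofReal_ne_top, hM.ne⟩)
  have hFint : Integrable F := ⟨hFm.aestronglyMeasurable,
    (hasFiniteIntegral_iff_ofReal hF0).2 (hFle.trans_lt htop.lt_top)⟩
  have hEle : ∫ x, ∫ y, F (x, y) ≤ σ.toReal * (Ip.toReal * C1 d s p α β + M.toReal) := by
    rw [← integral_prod F hFint, ← Measure.volume_eq_prod,
      integral_eq_lintegral_of_nonneg_ae hF0 hFm.aestronglyMeasurable]
    refine (ENNReal.toReal_mono htop hFle).trans_eq ?_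
    rw [ENNReal.toReal_mul, ENNReal.toReal_add (ENNReal.mul_ne_top hIp.ne ENNReal.ofReal_ne_top)
      hM.ne, ENNReal.toReal_mul, ENNReal.toReal_ofReal hC]
  have hHeq : ∫ x : EuclideanSpace ℝ (Fin d), |profile c N ‖x‖| ^ p * ‖x‖ ^ (α + β - s * p) =
      σ.toReal * Ip.toReal := by
    rw [integral_eq_lintegral_of_nonneg_ae (hnn _ _) (hmeas _ _), hH, ENNReal.toReal_mul]
  have hJeq : ∫ x : EuclideanSpace ℝ (Fin d), |profile c N ‖x‖| ^ q * ‖x‖ ^ (q / p * (α + β)) =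
      σ.toReal * Iq.toReal := by
    rw [integral_eq_lintegral_of_nonneg_ae (hnn _ _) (hmeas _ _), hJ, ENNReal.toReal_mul]
  have hNIq : N ≤ Iq.toReal :=
    (ENNReal.ofReal_le_iff_le_toReal hIq.ne).1 lintegral_cutoff_rpow_ge
  refine ⟨fun x => profile c N ‖x‖, by fun_prop, ⟨hmeas _ _, ?_⟩, hFint, ⟨hmeas _ _, ?_⟩, ?_, ?_⟩
  · rw [hasFiniteIntegral_iff_ofReal (hnn _ _), hW]
    exact ENNReal.mul_lt_top hσtop.lt_top (lintegral_cutoff_exp_lt_top hp0 hsp)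
  · rw [hasFiniteIntegral_iff_ofReal (hnn _ _), hJ]
    exact ENNReal.mul_lt_top hσtop.lt_top hIq
  · rw [hJeq]
    exact mul_pos hσpos (hN0.trans_le hNIq)
  · rw [hJeq, hHeq]
    calc _ ≤ σ.toReal * (Ip.toReal * C1 d s p α β + M.toReal) -
          C1 d s p α β * (σ.toReal * Ip.toReal) := sub_le_sub_right hEle _
      _ = σ.toReal * M.toReal := by ring
      _ < C₀ * (σ.toReal * N) ^ (p / q) := hN
      _ ≤ _ := by gcongr
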